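/- Assume (M₁), (M₂), (f₁) and (f₂). Then there exists e ∈ C_c^∞(Ω) such that J(e) < 0 and ‖∇e‖_𝓗 > 1. -/

import Mathlib

open MeasureTheory
open scoped NNReal RealInnerProductSpace

/-- The `𝓗`-modular: `ϱ_𝓗(w) = ∫_Ω (|w|^p + a(x)|w|^q) dx`. -/
noncomputable def rhoH {N : ℕ} (Ω : Set (EuclideanSpace ℝ (Fin N))) (p q : ℝ)
    (a w : EuclideanSpace ℝ (Fin N) → ℝ) : ℝ :=
  ∫ x in Ω, (|w x| ^ p + a x * |w x| ^ q)

/-- The Luxemburg norm `‖w‖_𝓗 = inf {λ > 0 : ϱ_𝓗(w/λ) ≤ 1}`. -/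
noncomputable def luxH {N : ℕ} (Ω : Set (EuclideanSpace ℝ (Fin N))) (p q : ℝ)
    (a w : EuclideanSpace ℝ (Fin N) → ℝ) : ℝ :=
  sInf {l : ℝ | 0 < l ∧ rhoH Ω p q a (fun x => w x / l) ≤ 1}

/-- `Ω` has Lipschitz boundary: near each boundary point there are a unit direction `v`
and a Lipschitz function `φ`, constant in the direction `v`, such that locally
`Ω = {y : φ(y) < ⟪y, v⟫}`. -/
def HasLipschitzBoundary {N : ℕ} (Ω : Set (EuclideanSpace ℝ (Fin N))) : Prop :=
  ∀ x ∈ frontier Ω, ∃ r : ℝ, 0 < r ∧ ∃ v : EuclideanSpace ℝ (Fin N), ‖v‖ = 1 ∧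
    ∃ (K : ℝ≥0) (φ : EuclideanSpace ℝ (Fin N) → ℝ), LipschitzWith K φ ∧
      (∀ y : EuclideanSpace ℝ (Fin N), ∀ t : ℝ, φ (y + t • v) = φ y) ∧
      ∀ y ∈ Metric.ball x r, (y ∈ Ω ↔ φ y < ⟪y, v⟫)

/-- `u` belongs to `C_c^∞(Ω)`: `u` is smooth, compactly supported, with support inside `Ω`. -/
def CcInfty {N : ℕ} (Ω : Set (EuclideanSpace ℝ (Fin N)))
    (u : EuclideanSpace ℝ (Fin N) → ℝ) : Prop :=
  ContDiff ℝ (⊤ : ℕ∞) u ∧ HasCompactSupport u ∧ tsupport u ⊆ Ω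

/-!
Fix `φ ≥ 0` in `C_c^∞(Ω)`, not identically zero, and follow `J` along the ray `t ↦ tφ`. The energy
`φ_𝓗(t∇φ)` is a sum of a `t^p` and a `t^q` term, and integrating `t M(t) ≤ θ 𝓜(t)` gives
`𝓜(t) ≤ C t^θ`; hence the Kirchhoff term is `O(t^{qθ})`. Integrating `σ F ≤ t f` the same way gives
`F(x, t) ≥ b t^σ - D` uniformly in `x`, so the nonlinear term is at least of order `t^σ`. As
`qθ < σ`, `J(tφ) → -∞`. The norm `‖t∇φ‖_𝓗` dominates the `L^p` norm of `t∇φ`, so it tends to `∞`.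
-/

open Set Filter Asymptotics Topology

section PowerGrowth

theorem mul_rpow_div_le_of_mul_le_mul_deriv {H H' : ℝ → ℝ} {s₀ σ s : ℝ} (hs₀ : 0 < s₀)
    (hderiv : ∀ s, s₀ ≤ s → HasDerivAt H (H' s) s) (hσ : ∀ s, s₀ ≤ s → σ * H s ≤ s * H' s)
    (hs : s₀ ≤ s) : H s₀ * (s / s₀) ^ σ ≤ H s := by
  have hderiv' (s) (hs : s₀ ≤ s) : HasDerivAt (fun s => H s * s ^ (-σ))
      ((s * H' s - σ * H s) * s ^ (-σ - 1)) s := by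
    have hs0 : 0 < s := hs₀.trans_le hs
    refine ((hderiv s hs).mul (Real.hasDerivAt_rpow_const (Or.inl hs0.ne'))).congr_deriv ?_
    rw [Real.rpow_sub_one hs0.ne']
    field_simp
    ring
  have hmono : MonotoneOn (fun s => H s * s ^ (-σ)) (Ici s₀) := by
    refine monotoneOn_of_hasDerivWithinAt_nonneg (convex_Ici s₀)
      (fun s hs => (hderiv' s hs).continuousAt.continuousWithinAt)
      (fun s hs => (hderiv' s (interior_subset hs)).hasDerivWithinAt) fun s hs => ?_
    have hs : s₀ ≤ s := interior_subset hs
    exact mul_nonneg (sub_nonneg.2 (hσ s hs)) (Real.rpow_nonneg (hs₀.le.trans hs) _)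
  have hs0 : 0 < s := hs₀.trans_le hs
  have hle : H s₀ * s₀ ^ (-σ) ≤ H s * s ^ (-σ) := hmono self_mem_Ici hs hs
  rw [Real.rpow_neg hs₀.le, Real.rpow_neg hs0.le, ← div_eq_mul_inv, ← div_eq_mul_inv,
    le_div_iff₀ (Real.rpow_pos_of_pos hs0 σ)] at hle
  rwa [Real.div_rpow hs0.le hs₀.le, mul_div_left_comm, mul_comm]

theorem hasDerivAt_integral_of_continuousOn_Ici {F : Type*} [NormedAddCommGroup F]
    [NormedSpace ℝ F] [CompleteSpace F] {M : ℝ → F} {a t : ℝ} (hM : ContinuousOn M (Ici a))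
    (ht : a < t) : HasDerivAt (fun s => ∫ τ in a..s, M τ) (M t) t :=
  intervalIntegral.integral_hasDerivAt_right
    ((hM.mono Icc_subset_Ici_self).intervalIntegrable_of_Icc ht.le)
    ((hM.mono Ioi_subset_Ici_self).stronglyMeasurableAtFilter isOpen_Ioi _ ht)
    (hM.continuousAt (Ici_mem_nhds ht))

theorem exists_eventually_integral_le_mul_rpow {M : ℝ → ℝ} (hMc : ContinuousOn M (Ici 0)) {θ : ℝ}
    (hMθ : ∀ᶠ t in atTop, t * M t ≤ θ * ∫ τ in (0 : ℝ)..t, M τ) :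
    ∃ C, ∀ᶠ t in atTop, ∫ τ in (0 : ℝ)..t, M τ ≤ C * t ^ θ := by
  obtain ⟨s₀, hs₀⟩ := eventually_atTop.1 (hMθ.and (eventually_gt_atTop 0))
  have hpos : 0 < s₀ := (hs₀ s₀ le_rfl).2
  refine ⟨(∫ τ in (0 : ℝ)..s₀, M τ) / s₀ ^ θ, eventually_atTop.2 ⟨s₀, fun t ht => ?_⟩⟩
  have hgrowth := mul_rpow_div_le_of_mul_le_mul_deriv (H := fun s => -∫ τ in (0 : ℝ)..s, M τ)
    (σ := θ) hpos
    (fun s hs => (hasDerivAt_integral_of_continuousOn_Ici hMc (hpos.trans_le hs)).neg)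
    (fun s hs => by linarith [(hs₀ s hs).1]) ht
  rw [Real.div_rpow (hpos.le.trans ht) hpos.le] at hgrowth
  calc ∫ τ in (0 : ℝ)..t, M τ ≤ (∫ τ in (0 : ℝ)..s₀, M τ) * (t ^ θ / s₀ ^ θ) := by linarith
    _ = (∫ τ in (0 : ℝ)..s₀, M τ) / s₀ ^ θ * t ^ θ := by ring

theorem abs_integral_le_of_abs_le {h : ℝ → ℝ} {B T s : ℝ} (hB : ∀ τ ∈ Icc 0 T, |h τ| ≤ B)
    (hs : s ∈ Icc 0 T) : |∫ τ in (0 : ℝ)..s, h τ| ≤ B * T := by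
  have hle := intervalIntegral.norm_integral_le_of_norm_le_const (a := 0) (b := s) (f := h) (C := B)
    fun τ hτ => hB τ (by
      rw [uIoc_of_le hs.1] at hτ
      exact ⟨hτ.1.le, hτ.2.trans hs.2⟩)
  rw [sub_zero, abs_of_nonneg hs.1] at hle
  have hB0 : 0 ≤ B := (abs_nonneg _).trans (hB s hs)
  exact hle.trans (mul_le_mul_of_nonneg_left hs.2 hB0)

/-- The constants do not depend on `h`, which makes the bound uniform over a family. -/
theorem mul_rpow_sub_le_integral_of_ambrosettiRabinowitz {h : ℝ → ℝ} (hh : Continuous h)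
    {σ c T B s : ℝ} (hσ : 0 < σ) (hc : 0 < c) (hT : 0 < T) (hB : ∀ τ ∈ Icc 0 T, |h τ| ≤ B)
    (hAR : ∀ t, T ≤ t →
      c ≤ σ * (∫ τ in (0 : ℝ)..t, h τ) ∧ σ * (∫ τ in (0 : ℝ)..t, h τ) ≤ t * h t)
    (hs : 0 ≤ s) : c / σ / T ^ σ * s ^ σ - (c / σ + B * T) ≤ ∫ τ in (0 : ℝ)..s, h τ := by
  have hcσ : 0 < c / σ := div_pos hc hσ
  have hBT : 0 ≤ B * T := (abs_nonneg _).trans (abs_integral_le_of_abs_le hB ⟨hT.le, le_rfl⟩)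
  have hscale : c / σ / T ^ σ * s ^ σ = c / σ * (s / T) ^ σ := by
    rw [Real.div_rpow hs hT.le]
    ring
  rw [hscale]
  rcases le_total T s with hTs | hsT
  · have hgrowth : (∫ τ in (0 : ℝ)..T, h τ) * (s / T) ^ σ ≤ ∫ τ in (0 : ℝ)..s, h τ :=
      mul_rpow_div_le_of_mul_le_mul_deriv hT
        (fun t ht => hasDerivAt_integral_of_continuousOn_Ici hh.continuousOn (hT.trans_le ht))
        (fun t ht => (hAR t ht).2) hTs
    have hcT : c / σ ≤ ∫ τ in (0 : ℝ)..T, h τ := (div_le_iff₀' hσ).2 (hAR T le_rfl).1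
    have := mul_le_mul_of_nonneg_right hcT (Real.rpow_nonneg (div_nonneg hs hT.le) σ)
    linarith
  · have hpow : (s / T) ^ σ ≤ 1 :=
      Real.rpow_le_one (div_nonneg hs hT.le) ((div_le_one hT).2 hsT) hσ.le
    have := mul_le_of_le_one_right hcσ.le hpow
    have := (abs_le.1 (abs_integral_le_of_abs_le hB ⟨hs, hsT⟩)).1
    linarith

theorem isLittleO_rpow_rpow_atTop {α β : ℝ} (h : α < β) :
    (fun t : ℝ => t ^ α) =o[atTop] fun t => t ^ β := by
  refine (isLittleO_iff_tendsto' ?_).2 ?_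
  · filter_upwards [eventually_gt_atTop 0] with t ht hβ
    exact absurd hβ (Real.rpow_pos_of_pos ht β).ne'
  · refine (tendsto_rpow_neg_atTop (sub_pos.2 h)).congr' ?_
    filter_upwards [eventually_gt_atTop 0] with t ht
    rw [← Real.rpow_sub ht, neg_sub]

theorem tendsto_sub_const_mul_atBot_of_isLittleO {ι : Type*} {l : Filter ι} {u v : ι → ℝ}
    (huv : u =o[l] v) (hv : Tendsto v l atTop) {b : ℝ} (hb : 0 < b) :
    Tendsto (fun i => u i - b * v i) l atBot := by
  refine tendsto_atBot_mono' l ?_ (hv.const_mul_atTop_of_neg (neg_lt_zero.2 (half_pos hb)))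
  filter_upwards [huv.bound (half_pos hb), hv.eventually_ge_atTop 0] with i hi hvi
  rw [Real.norm_eq_abs, Real.norm_of_nonneg hvi] at hi
  linarith [le_abs_self (u i)]

end PowerGrowth

section Caratheodory

variable {X : Type*} [MeasurableSpace X] {μ : Measure X}

theorem stronglyMeasurable_integral_of_continuous {F : Type*} [NormedAddCommGroup F]
    [NormedSpace ℝ F] {f : X → ℝ → F} (hfm : ∀ t, StronglyMeasurable fun x => f x t)
    (hfc : ∀ x, Continuous (f x)) {u : X → ℝ} (hu : Measurable u) :
    StronglyMeasurable fun x => ∫ τ in (0 : ℝ)..u x, f x τ := by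
  have hjoint : StronglyMeasurable (Function.uncurry fun (t : ℝ) (x : X) => f x t) :=
    stronglyMeasurable_uncurry_of_continuous_of_stronglyMeasurable hfc hfm
  have hscaled : StronglyMeasurable fun z : X × ℝ => f z.1 (z.2 * u z.1) :=
    hjoint.comp_measurable (g := fun z : X × ℝ => (z.2 * u z.1, z.1)) (by fun_prop)
  -- Rescaling to a fixed interval turns the integral into a parametric one.
  have hrescale : (fun x => ∫ τ in (0 : ℝ)..u x, f x τ) =
      fun x => u x • ∫ s in (0 : ℝ)..1, f x (s * u x) := by
    funext x
    rw [intervalIntegral.smul_integral_comp_mul_right, zero_mul, one_mul]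
  simp only [hrescale, intervalIntegral.integral_of_le zero_le_one]
  exact hu.stronglyMeasurable.smul hscaled.integral_prod_right

theorem aestronglyMeasurable_integral_of_caratheodory {F : Type*} [NormedAddCommGroup F]
    [NormedSpace ℝ F] {f : X → ℝ → F} (hfm : ∀ t, StronglyMeasurable fun x => f x t)
    (hfc : ∀ᵐ x ∂μ, Continuous (f x)) {u : X → ℝ} (hu : Measurable u) :
    AEStronglyMeasurable (fun x => ∫ τ in (0 : ℝ)..u x, f x τ) μ := by
  obtain ⟨S, hS, hSm, hSμ⟩ := exists_measurable_superset_of_null (ae_iff.1 hfc)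
  let g : X → ℝ → F := fun x t => Sᶜ.indicator (fun x => f x t) x
  have hgf (x) (hx : x ∉ S) : g x = f x := funext fun t => indicator_of_mem hx _
  have hgc (x) : Continuous (g x) := by
    by_cases hx : x ∈ S
    · rw [show g x = fun _ => 0 from funext fun t => indicator_of_notMem (not_not_intro hx) _]
      exact continuous_const
    · rw [hgf x hx]
      exact not_not.1 fun hcont => hx (hS hcont)
  refine ⟨_, stronglyMeasurable_integral_of_continuous (fun t => (hfm t).indicator hSm.compl) hgc
    hu, ?_⟩
  filter_upwards [measure_eq_zero_iff_ae_notMem.1 hSμ] with x hx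
  rw [← hgf x hx]

theorem exists_mul_rpow_sub_le_integral [IsFiniteMeasure μ] {f : X → ℝ → ℝ}
    (hfm : ∀ t, Measurable fun x => f x t) (hfc : ∀ᵐ x ∂μ, Continuous (f x))
    (hfb : ∀ T : ℝ, ∃ B, ∀ᵐ x ∂μ, ∀ t ∈ Icc 0 T, |f x t| ≤ B) {σ c t₀ : ℝ} (hσ : 0 < σ)
    (hc : 0 < c) (hAR : ∀ᵐ x ∂μ, ∀ t, t₀ ≤ t →
      c ≤ σ * (∫ τ in (0 : ℝ)..t, f x τ) ∧ σ * (∫ τ in (0 : ℝ)..t, f x τ) ≤ t * f x t)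
    {φ : X → ℝ} (hφm : Measurable φ) {R : ℝ} (hφ : ∀ x, φ x ∈ Icc 0 R)
    (hφpos : 0 < ∫ x, φ x ^ σ ∂μ) :
    ∃ b > 0, ∃ D, ∀ t, 0 ≤ t →
      b * t ^ σ - D ≤ ∫ x, (∫ τ in (0 : ℝ)..(t * φ x), f x τ) ∂μ := by
  let T := max t₀ 1
  have hT : 0 < T := zero_lt_one.trans_le (le_max_right _ _)
  obtain ⟨B, hB⟩ := hfb T
  set b := c / σ / T ^ σ
  refine ⟨b * ∫ x, φ x ^ σ ∂μ, by positivity, μ.real univ * (c / σ + B * T), fun t ht => ?_⟩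
  have hintσ : Integrable (fun x => φ x ^ σ) μ :=
    not_imp_comm.1 integral_undef hφpos.ne'
  have hmem (x) : t * φ x ∈ Icc 0 (t * R) :=
    ⟨mul_nonneg ht (hφ x).1, mul_le_mul_of_nonneg_left (hφ x).2 ht⟩
  have hintF : Integrable (fun x => ∫ τ in (0 : ℝ)..(t * φ x), f x τ) μ := by
    obtain ⟨B', hB'⟩ := hfb (t * R)
    refine .of_bound (aestronglyMeasurable_integral_of_caratheodory
      (fun s => (hfm s).stronglyMeasurable) hfc (hφm.const_mul t)) (B' * (t * R)) ?_
    filter_upwards [hB'] with x hx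
    exact abs_integral_le_of_abs_le hx (hmem x)
  calc (b * ∫ x, φ x ^ σ ∂μ) * t ^ σ - μ.real univ * (c / σ + B * T)
      = ∫ x, (b * t ^ σ * φ x ^ σ - (c / σ + B * T)) ∂μ := by
        rw [integral_sub (hintσ.const_mul _) (integrable_const _), integral_const_mul,
          integral_const, smul_eq_mul]
        ring
    _ ≤ ∫ x, (∫ τ in (0 : ℝ)..(t * φ x), f x τ) ∂μ := by
        refine integral_mono_ae ((hintσ.const_mul _).sub (integrable_const _)) hintF ?_
        filter_upwards [hfc, hB, hAR] with x hcx hBx hARx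
        have hlower := mul_rpow_sub_le_integral_of_ambrosettiRabinowitz hcx hσ hc hT hBx
          (fun s hs => hARx s ((le_max_left _ _).trans hs)) (hmem x).1
        rwa [Real.mul_rpow ht (hφ x).1, ← mul_assoc] at hlower

end Caratheodory

section DoublePhase

variable {X : Type*} [MeasurableSpace X] {μ : Measure X} {p q : ℝ} {a w : X → ℝ}

/-- The modular `∫ (|w|^p + a |w|^q) dμ` of the double phase operator, for an arbitrary measure;
`rhoH Ω` is the case `μ = volume.restrict Ω`. -/
noncomputable def doublePhaseModular (μ : Measure X) (p q : ℝ) (a w : X → ℝ) : ℝ :=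
  ∫ x, (|w x| ^ p + a x * |w x| ^ q) ∂μ

/-- The Luxemburg norm of `doublePhaseModular`; `luxH Ω` is the case `μ = volume.restrict Ω`. -/
noncomputable def doublePhaseNorm (μ : Measure X) (p q : ℝ) (a w : X → ℝ) : ℝ :=
  sInf {l : ℝ | 0 < l ∧ doublePhaseModular μ p q a (fun x => w x / l) ≤ 1}

/-- The double phase energy `∫ (|w|^p / p + a |w|^q / q) dμ`, which is `φ_𝓗(∇u)` for
`w = ‖∇u‖`. -/
noncomputable def doublePhaseEnergy (μ : Measure X) (p q : ℝ) (a w : X → ℝ) : ℝ :=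
  ∫ x, (|w x| ^ p / p + a x * |w x| ^ q / q) ∂μ

theorem doublePhaseModular_div (hwp : Integrable (fun x => |w x| ^ p) μ)
    (hwq : Integrable (fun x => a x * |w x| ^ q) μ) {l : ℝ} (hl : 0 ≤ l) :
    doublePhaseModular μ p q a (fun x => w x / l) =
      (∫ x, |w x| ^ p ∂μ) / l ^ p + (∫ x, a x * |w x| ^ q ∂μ) / l ^ q := by
  simp only [doublePhaseModular, abs_div, abs_of_nonneg hl, Real.div_rpow (abs_nonneg _) hl,
    ← mul_div_assoc]
  rw [integral_add (hwp.div_const _) (hwq.div_const _), integral_div, integral_div]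

theorem doublePhaseEnergy_const_mul (hwp : Integrable (fun x => |w x| ^ p) μ)
    (hwq : Integrable (fun x => a x * |w x| ^ q) μ) {t : ℝ} (ht : 0 ≤ t) :
    doublePhaseEnergy μ p q a (fun x => t * w x) =
      (∫ x, |w x| ^ p ∂μ) / p * t ^ p + (∫ x, a x * |w x| ^ q ∂μ) / q * t ^ q := by
  simp only [doublePhaseEnergy, abs_mul, abs_of_nonneg ht, Real.mul_rpow ht (abs_nonneg _),
    mul_left_comm (a _)]
  rw [integral_add ((hwp.const_mul _).div_const _) ((hwq.const_mul _).div_const _), integral_div,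
    integral_div, integral_const_mul, integral_const_mul]
  ring

theorem rpow_inv_integral_le_doublePhaseNorm (hp : 0 < p) (hq : 0 < q) (ha : 0 ≤ᵐ[μ] a)
    (hwp : Integrable (fun x => |w x| ^ p) μ) (hwq : Integrable (fun x => a x * |w x| ^ q) μ) :
    (∫ x, |w x| ^ p ∂μ) ^ p⁻¹ ≤ doublePhaseNorm μ p q a w := by
  set I := ∫ x, |w x| ^ p ∂μ
  set K := ∫ x, a x * |w x| ^ q ∂μ
  have hI0 : 0 ≤ I := integral_nonneg fun x => Real.rpow_nonneg (abs_nonneg _) _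
  have hK0 : 0 ≤ K := integral_nonneg_of_ae <| by
    filter_upwards [ha] with x hx
    exact mul_nonneg hx (Real.rpow_nonneg (abs_nonneg _) _)
  have hlim : Tendsto (fun l : ℝ => I / l ^ p + K / l ^ q) atTop (𝓝 0) := by
    simpa only [add_zero] using
      ((tendsto_rpow_atTop hp).const_div_atTop I).add ((tendsto_rpow_atTop hq).const_div_atTop K)
  refine le_csInf ?_ ?_
  · obtain ⟨l, hl, hl0⟩ := ((hlim.eventually_le_const one_pos).and (eventually_gt_atTop 0)).exists
    exact ⟨l, hl0, (doublePhaseModular_div hwp hwq hl0.le).trans_le hl⟩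
  · rintro l ⟨hl0, hl⟩
    rw [doublePhaseModular_div hwp hwq hl0.le] at hl
    have hKl : 0 ≤ K / l ^ q := div_nonneg hK0 (Real.rpow_nonneg hl0.le q)
    have hIl : I ≤ l ^ p := (div_le_one (Real.rpow_pos_of_pos hl0 p)).1 (by linarith)
    exact (Real.rpow_inv_le_iff_of_pos hI0 hl0.le hp).2 hIl

theorem tendsto_doublePhaseNorm_const_mul_atTop (hp : 0 < p) (hq : 0 < q) (ha : 0 ≤ᵐ[μ] a)
    (hwp : Integrable (fun x => |w x| ^ p) μ) (hwq : Integrable (fun x => a x * |w x| ^ q) μ)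
    (hpos : 0 < ∫ x, |w x| ^ p ∂μ) :
    Tendsto (fun t => doublePhaseNorm μ p q a fun x => t * w x) atTop atTop := by
  refine tendsto_atTop_mono' atTop ?_
    (tendsto_id.atTop_mul_const (Real.rpow_pos_of_pos hpos p⁻¹))
  filter_upwards [eventually_ge_atTop 0] with t ht
  have habs (s : ℝ) (x : X) : |t * w x| ^ s = t ^ s * |w x| ^ s := by
    rw [abs_mul, abs_of_nonneg ht, Real.mul_rpow ht (abs_nonneg _)]
  have hle := rpow_inv_integral_le_doublePhaseNorm (w := fun x => t * w x) hp hq ha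
    (by simpa only [habs] using hwp.const_mul _)
    (by simpa only [habs, mul_left_comm (a _)] using hwq.const_mul _)
  simp only [habs, integral_const_mul] at hle
  rwa [Real.mul_rpow (Real.rpow_nonneg ht p) hpos.le, Real.rpow_rpow_inv ht hp.ne'] at hle

theorem tendsto_doublePhaseEnergy_const_mul_atTop (hp : 0 < p) (hq : 0 < q) (ha : 0 ≤ᵐ[μ] a)
    (hwp : Integrable (fun x => |w x| ^ p) μ) (hwq : Integrable (fun x => a x * |w x| ^ q) μ)
    (hpos : 0 < ∫ x, |w x| ^ p ∂μ) :
    Tendsto (fun t => doublePhaseEnergy μ p q a fun x => t * w x) atTop atTop := by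
  have hK0 : 0 ≤ ∫ x, a x * |w x| ^ q ∂μ := integral_nonneg_of_ae <| by
    filter_upwards [ha] with x hx
    exact mul_nonneg hx (Real.rpow_nonneg (abs_nonneg _) _)
  refine tendsto_atTop_mono' atTop ?_
    ((tendsto_rpow_atTop hp).const_mul_atTop (div_pos hpos hp))
  filter_upwards [eventually_ge_atTop 0] with t ht
  rw [doublePhaseEnergy_const_mul hwp hwq ht]
  exact le_add_of_nonneg_right (by positivity)

theorem isBigO_doublePhaseEnergy_const_mul (hpq : p ≤ q)
    (hwp : Integrable (fun x => |w x| ^ p) μ) (hwq : Integrable (fun x => a x * |w x| ^ q) μ) :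
    (fun t => doublePhaseEnergy μ p q a fun x => t * w x) =O[atTop] fun t => t ^ q := by
  have hpow : (fun t : ℝ => t ^ p) =O[atTop] fun t => t ^ q := by
    refine .of_bound' ?_
    filter_upwards [eventually_ge_atTop 1] with t ht
    have ht0 : 0 ≤ t := zero_le_one.trans ht
    rw [Real.norm_of_nonneg (Real.rpow_nonneg ht0 p), Real.norm_of_nonneg (Real.rpow_nonneg ht0 q)]
    exact Real.rpow_le_rpow_of_exponent_le ht hpq
  have hsplit : (fun t => doublePhaseEnergy μ p q a fun x => t * w x) =ᶠ[atTop] fun t =>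
      (∫ x, |w x| ^ p ∂μ) / p * t ^ p + (∫ x, a x * |w x| ^ q ∂μ) / q * t ^ q := by
    filter_upwards [eventually_ge_atTop 0] with t ht
    exact doublePhaseEnergy_const_mul hwp hwq ht
  exact hsplit.trans_isBigO
    ((hpow.const_mul_left _).add ((isBigO_refl _ _).const_mul_left _))

theorem exists_isLittleO_integral_doublePhaseEnergy_le (hp : 0 < p) (hpq : p ≤ q)
    (ha : 0 ≤ᵐ[μ] a) (hwp : Integrable (fun x => |w x| ^ p) μ)
    (hwq : Integrable (fun x => a x * |w x| ^ q) μ) (hpos : 0 < ∫ x, |w x| ^ p ∂μ) {M : ℝ → ℝ}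
    (hMc : ContinuousOn M (Ici 0)) {θ σ : ℝ} (hθ : 0 ≤ θ) (hσ : q * θ < σ)
    (hMθ : ∀ᶠ t in atTop, t * M t ≤ θ * ∫ τ in (0 : ℝ)..t, M τ) :
    ∃ u : ℝ → ℝ, u =o[atTop] (fun t => t ^ σ) ∧ ∀ᶠ t in atTop,
      ∫ τ in (0 : ℝ)..doublePhaseEnergy μ p q a (fun x => t * w x), M τ ≤ u t := by
  obtain ⟨C, hC⟩ := exists_eventually_integral_le_mul_rpow hMc hMθ
  refine ⟨fun t => C * doublePhaseEnergy μ p q a (fun x => t * w x) ^ θ, ?_,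
    (tendsto_doublePhaseEnergy_const_mul_atTop hp (hp.trans_le hpq) ha hwp hwq
      hpos).eventually hC⟩
  have hθq : (fun t : ℝ => (t ^ q) ^ θ) =ᶠ[atTop] fun t => t ^ (q * θ) := by
    filter_upwards [eventually_ge_atTop 0] with t ht
    exact (Real.rpow_mul ht q θ).symm
  have hnonneg : 0 ≤ᶠ[atTop] fun t : ℝ => t ^ q := by
    filter_upwards [eventually_ge_atTop 0] with t ht
    exact Real.rpow_nonneg ht q
  exact ((((isBigO_doublePhaseEnergy_const_mul hpq hwp hwq).rpow hθ hnonneg).trans_eventuallyEq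
    hθq).trans_isLittleO (isLittleO_rpow_rpow_atTop hσ)).const_mul_left C

end DoublePhase

section CompactSupport

variable {X F : Type*} [TopologicalSpace X] [NormedAddCommGroup F] {g : X → F} {s : ℝ}

theorem hasCompactSupport_norm_rpow (hg : HasCompactSupport g) (hs : s ≠ 0) :
    HasCompactSupport fun x => ‖g x‖ ^ s :=
  hg.comp_left (g := fun y : F => ‖y‖ ^ s) (by rw [norm_zero, Real.zero_rpow hs])

variable [MeasurableSpace X] [OpensMeasurableSpace X] {μ : Measure X} {Ω : Set X}

theorem integrable_norm_rpow [IsFiniteMeasureOnCompacts μ] (hg : Continuous g)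
    (hgc : HasCompactSupport g) (hs : 0 < s) : Integrable (fun x => ‖g x‖ ^ s) μ :=
  (hg.norm.rpow_const fun _ => Or.inr hs.le).integrable_of_hasCompactSupport
    (hasCompactSupport_norm_rpow hgc hs.ne')

theorem setIntegral_norm_rpow_pos [IsFiniteMeasureOnCompacts μ] [μ.IsOpenPosMeasure]
    (hg : Continuous g) (hgc : HasCompactSupport g) (hgΩ : tsupport g ⊆ Ω) (hs : 0 < s) {x₀ : X}
    (hx₀ : g x₀ ≠ 0) : 0 < ∫ x in Ω, ‖g x‖ ^ s ∂μ := by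
  rw [setIntegral_eq_integral_of_forall_compl_eq_zero fun x hx => by
    rw [image_eq_zero_of_notMem_tsupport fun h => hx (hgΩ h), norm_zero, Real.zero_rpow hs.ne']]
  exact (hg.norm.rpow_const fun _ => Or.inr hs.le).integral_pos_of_hasCompactSupport_nonneg_nonzero
    (hasCompactSupport_norm_rpow hgc hs.ne') (fun x => Real.rpow_nonneg (norm_nonneg _) s)
    (Real.rpow_pos_of_pos (norm_pos_iff.2 hx₀) s).ne'

theorem integrableOn_mul_norm_rpow [T2Space X] {a : X → ℝ} (ha : LocallyIntegrableOn a Ω μ)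
    (hg : Continuous g) (hgc : HasCompactSupport g) (hgΩ : tsupport g ⊆ Ω) (hs : 0 < s) :
    IntegrableOn (fun x => a x * ‖g x‖ ^ s) Ω μ := by
  have hK : IntegrableOn (fun x => a x * ‖g x‖ ^ s) (tsupport g) μ :=
    (ha.integrableOn_compact_subset hgΩ hgc).mul_continuousOn
      (hg.norm.rpow_const fun _ => Or.inr hs.le).continuousOn hgc
  refine ((integrableOn_iff_integrable_of_support_subset ?_).1 hK).integrableOn
  refine Function.support_subset_iff'.2 fun x hx => ?_
  rw [image_eq_zero_of_notMem_tsupport hx, norm_zero, Real.zero_rpow hs.ne', mul_zero]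

theorem exists_mul_rpow_sub_le_setIntegral [IsFiniteMeasureOnCompacts μ] [μ.IsOpenPosMeasure]
    (hΩ : MeasurableSet Ω) {f : X → ℝ → ℝ}
    (hfm : ∀ t, Measurable fun x => f x t) (hfc : ∀ᵐ x ∂μ.restrict Ω, Continuous (f x))
    (hfb : ∀ T : ℝ, ∃ B, ∀ᵐ x ∂μ.restrict Ω, ∀ t ∈ Icc 0 T, |f x t| ≤ B) {σ c t₀ : ℝ}
    (hσ : 0 < σ) (hc : 0 < c) (hAR : ∀ᵐ x ∂μ.restrict Ω, ∀ t, t₀ ≤ t →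
      c ≤ σ * (∫ τ in (0 : ℝ)..t, f x τ) ∧ σ * (∫ τ in (0 : ℝ)..t, f x τ) ≤ t * f x t)
    {φ : X → ℝ} (hφ : Continuous φ) (hφc : HasCompactSupport φ) (hφΩ : tsupport φ ⊆ Ω)
    (hφ0 : ∀ x, 0 ≤ φ x) {x₀ : X} (hx₀ : φ x₀ ≠ 0) :
    ∃ b > 0, ∃ D, ∀ t, 0 ≤ t →
      b * t ^ σ - D ≤ ∫ x in Ω, (∫ τ in (0 : ℝ)..(t * φ x), f x τ) ∂μ := by
  have hle : μ.restrict (tsupport φ) ≤ μ.restrict Ω := Measure.restrict_mono hφΩ le_rfl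
  have : IsFiniteMeasure (μ.restrict (tsupport φ)) :=
    isFiniteMeasure_restrict.2 hφc.measure_lt_top.ne
  obtain ⟨R, hR⟩ := hφc.exists_bound_of_continuous hφ
  have hpos : 0 < ∫ x in tsupport φ, φ x ^ σ ∂μ := by
    simpa only [Real.norm_of_nonneg (hφ0 _)] using
      setIntegral_norm_rpow_pos hφ hφc subset_rfl hσ hx₀
  obtain ⟨b, hb, D, hD⟩ := exists_mul_rpow_sub_le_integral hfm (ae_mono hle hfc)
    (fun T => (hfb T).imp fun _ h => ae_mono hle h) hσ hc (ae_mono hle hAR) hφ.measurable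
    (fun x => ⟨hφ0 x, (le_abs_self _).trans (hR x)⟩) hpos
  refine ⟨b, hb, D, fun t ht => (hD t ht).trans_eq ?_⟩
  refine (setIntegral_eq_of_subset_of_forall_sdiff_eq_zero hΩ hφΩ fun x hx => ?_).symm
  rw [image_eq_zero_of_notMem_tsupport hx.2, mul_zero, intervalIntegral.integral_same]

end CompactSupport

theorem exists_fderiv_ne_zero_of_hasCompactSupport {E F : Type*} [NormedAddCommGroup E]
    [NormedSpace ℝ E] [Nontrivial E] [NormedAddCommGroup F] [NormedSpace ℝ F] {φ : E → F}
    (hφ : Differentiable ℝ φ) (hφc : HasCompactSupport φ) {x₀ : E} (hx₀ : φ x₀ ≠ 0) :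
    ∃ y, fderiv ℝ φ y ≠ 0 := by
  by_contra! hzero
  have : NoncompactSpace E := NormedSpace.noncompactSpace ℝ E
  have hsupp : tsupport φ = univ := eq_univ_of_forall fun x => subset_tsupport φ <| by
    rwa [Function.mem_support, is_const_of_fderiv_eq_zero hφ hzero x x₀]
  exact noncompact_univ E (hsupp ▸ hφc)

theorem norm_fderiv_const_mul {E : Type*} [NormedAddCommGroup E] [NormedSpace ℝ E] {t : ℝ}
    (ht : 0 ≤ t) (φ : E → ℝ) (x : E) :
    ‖fderiv ℝ (fun y => t * φ y) x‖ = t * ‖fderiv ℝ φ x‖ := by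
  have hfderiv : fderiv ℝ (fun y => t * φ y) x = t • fderiv ℝ φ x :=
    congrFun (fderiv_const_smul_field t) x
  rw [hfderiv, norm_smul, Real.norm_of_nonneg ht]

section Kirchhoff

variable {E : Type*} [NormedAddCommGroup E] [NormedSpace ℝ E] [MeasurableSpace E]

/-- The functional `J(u) = 𝓜(φ_𝓗(∇u)) - ∫ F(x, u) dμ` of the Kirchhoff double phase problem, with
`𝓜` and `F` written as the primitives of `M` and `f`. -/
noncomputable def kirchhoffFunctional (μ : Measure E) (p q : ℝ) (a : E → ℝ) (M : ℝ → ℝ)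
    (f : E → ℝ → ℝ) (u : E → ℝ) : ℝ :=
  (∫ τ in (0 : ℝ)..doublePhaseEnergy μ p q a (fun x => ‖fderiv ℝ u x‖), M τ) -
    ∫ x, (∫ τ in (0 : ℝ)..u x, f x τ) ∂μ

variable [BorelSpace E] {μ : Measure E} {Ω : Set E} {p q : ℝ} {a φ : E → ℝ}

theorem integrableOn_abs_norm_fderiv_rpow [IsFiniteMeasureOnCompacts μ] (hφ : ContDiff ℝ 1 φ)
    (hφc : HasCompactSupport φ) (hp : 0 < p) :
    IntegrableOn (fun x => |‖fderiv ℝ φ x‖| ^ p) Ω μ := by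
  simpa only [abs_norm] using (integrable_norm_rpow (hφ.continuous_fderiv one_ne_zero)
    (hφc.fderiv ℝ) hp).integrableOn

theorem integrableOn_mul_abs_norm_fderiv_rpow (ha : LocallyIntegrableOn a Ω μ)
    (hφ : ContDiff ℝ 1 φ) (hφc : HasCompactSupport φ) (hφΩ : tsupport φ ⊆ Ω) (hq : 0 < q) :
    IntegrableOn (fun x => a x * |‖fderiv ℝ φ x‖| ^ q) Ω μ := by
  simpa only [abs_norm] using integrableOn_mul_norm_rpow ha (hφ.continuous_fderiv one_ne_zero)
    (hφc.fderiv ℝ) ((tsupport_fderiv_subset ℝ).trans hφΩ) hq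

variable [Nontrivial E] [IsFiniteMeasureOnCompacts μ] [μ.IsOpenPosMeasure]

theorem setIntegral_abs_norm_fderiv_rpow_pos (hφ : ContDiff ℝ 1 φ) (hφc : HasCompactSupport φ)
    (hφΩ : tsupport φ ⊆ Ω) {x₀ : E} (hx₀ : φ x₀ ≠ 0) (hp : 0 < p) :
    0 < ∫ x in Ω, |‖fderiv ℝ φ x‖| ^ p ∂μ := by
  obtain ⟨y, hy⟩ :=
    exists_fderiv_ne_zero_of_hasCompactSupport (hφ.differentiable one_ne_zero) hφc hx₀
  simpa only [abs_norm] using setIntegral_norm_rpow_pos (hφ.continuous_fderiv one_ne_zero)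
    (hφc.fderiv ℝ) ((tsupport_fderiv_subset ℝ).trans hφΩ) hp hy

theorem tendsto_doublePhaseNorm_fderiv_const_mul_atTop (hp : 0 < p) (hq : 0 < q)
    (ha : LocallyIntegrableOn a Ω μ) (ha0 : ∀ᵐ x ∂μ.restrict Ω, 0 ≤ a x) (hφ : ContDiff ℝ 1 φ)
    (hφc : HasCompactSupport φ) (hφΩ : tsupport φ ⊆ Ω) {x₀ : E} (hx₀ : φ x₀ ≠ 0) :
    Tendsto (fun t => doublePhaseNorm (μ.restrict Ω) p q a
      fun x => ‖fderiv ℝ (fun y => t * φ y) x‖) atTop atTop := by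
  refine (tendsto_doublePhaseNorm_const_mul_atTop hp hq ha0
    (integrableOn_abs_norm_fderiv_rpow hφ hφc hp)
    (integrableOn_mul_abs_norm_fderiv_rpow ha hφ hφc hφΩ hq)
    (setIntegral_abs_norm_fderiv_rpow_pos hφ hφc hφΩ hx₀ hp)).congr' ?_
  filter_upwards [eventually_ge_atTop 0] with t ht
  simp only [norm_fderiv_const_mul ht φ]

theorem tendsto_kirchhoffFunctional_const_mul_atBot (hΩ : MeasurableSet Ω) (hp : 0 < p)
    (hpq : p ≤ q) (ha : LocallyIntegrableOn a Ω μ) (ha0 : ∀ᵐ x ∂μ.restrict Ω, 0 ≤ a x) {M : ℝ → ℝ}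
    (hMc : ContinuousOn M (Ici 0)) {θ : ℝ} (hθ : 0 ≤ θ)
    (hMθ : ∀ᶠ t in atTop, t * M t ≤ θ * ∫ τ in (0 : ℝ)..t, M τ) {f : E → ℝ → ℝ}
    (hfm : ∀ t, Measurable fun x => f x t) (hfc : ∀ᵐ x ∂μ.restrict Ω, Continuous (f x))
    (hfb : ∀ T : ℝ, ∃ B, ∀ᵐ x ∂μ.restrict Ω, ∀ t ∈ Icc 0 T, |f x t| ≤ B) {σ c t₀ : ℝ}
    (hσ : q * θ < σ) (hc : 0 < c) (hAR : ∀ᵐ x ∂μ.restrict Ω, ∀ t, t₀ ≤ t →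
      c ≤ σ * (∫ τ in (0 : ℝ)..t, f x τ) ∧ σ * (∫ τ in (0 : ℝ)..t, f x τ) ≤ t * f x t)
    (hφ : ContDiff ℝ 1 φ) (hφc : HasCompactSupport φ) (hφΩ : tsupport φ ⊆ Ω)
    (hφ0 : ∀ x, 0 ≤ φ x) {x₀ : E} (hx₀ : φ x₀ ≠ 0) :
    Tendsto (fun t => kirchhoffFunctional (μ.restrict Ω) p q a M f fun x => t * φ x)
      atTop atBot := by
  have hq : 0 < q := hp.trans_le hpq
  have hσ0 : 0 < σ := (mul_nonneg hq.le hθ).trans_lt hσ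
  obtain ⟨u, hu, hMu⟩ := exists_isLittleO_integral_doublePhaseEnergy_le hp hpq ha0
    (integrableOn_abs_norm_fderiv_rpow hφ hφc hp)
    (integrableOn_mul_abs_norm_fderiv_rpow ha hφ hφc hφΩ hq)
    (setIntegral_abs_norm_fderiv_rpow_pos hφ hφc hφΩ hx₀ hp) hMc hθ hσ hMθ
  obtain ⟨b, hb, D, hD⟩ := exists_mul_rpow_sub_le_setIntegral hΩ hfm hfc hfb hσ0 hc hAR
    hφ.continuous hφc hφΩ hφ0 hx₀
  refine tendsto_atBot_mono' atTop ?_ (tendsto_atBot_add_const_right atTop D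
    (tendsto_sub_const_mul_atBot_of_isLittleO hu (tendsto_rpow_atTop hσ0) hb))
  filter_upwards [hMu, eventually_ge_atTop 0] with t hMut ht
  simp only [kirchhoffFunctional, norm_fderiv_const_mul ht φ]
  linarith [hD t ht]

end Kirchhoff

theorem exists_ae_forall_mem_Icc_abs_le {X : Type*} [MeasurableSpace X] {μ : Measure X}
    {f : X → ℝ → ℝ} {A B α β : ℝ} (hA : 0 ≤ A) (hB : 0 ≤ B) (hα : 0 ≤ α) (hβ : 0 ≤ β)
    (hf : ∀ᵐ x ∂μ, ∀ t, |f x t| ≤ A * |t| ^ α + B * |t| ^ β) (T : ℝ) :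
    ∃ C, ∀ᵐ x ∂μ, ∀ t ∈ Icc 0 T, |f x t| ≤ C := by
  refine ⟨A * T ^ α + B * T ^ β, hf.mono fun x hx t ht => (hx t).trans ?_⟩
  rw [abs_of_nonneg ht.1]
  have := ht.1
  have := ht.2
  gcongr

theorem stmt_13_general {E : Type*} [NormedAddCommGroup E] [NormedSpace ℝ E]
    [FiniteDimensional ℝ E] [Nontrivial E] [MeasurableSpace E] [BorelSpace E] {μ : Measure E}
    [IsFiniteMeasureOnCompacts μ] [μ.IsOpenPosMeasure] {Ω : Set E} (hΩo : IsOpen Ω)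
    (hΩne : Ω.Nonempty) {p q : ℝ} (hp : 0 < p) (hpq : p ≤ q) {a : E → ℝ}
    (ha : LocallyIntegrableOn a Ω μ) (ha0 : ∀ᵐ x ∂μ.restrict Ω, 0 ≤ a x) {M : ℝ → ℝ}
    (hMc : ContinuousOn M (Ici 0)) {θ : ℝ} (hθ : 0 ≤ θ)
    (hMθ : ∀ᶠ t in atTop, t * M t ≤ θ * ∫ τ in (0 : ℝ)..t, M τ) {f : E → ℝ → ℝ}
    (hfm : ∀ t, Measurable fun x => f x t) (hfc : ∀ᵐ x ∂μ.restrict Ω, Continuous (f x))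
    (hfb : ∀ T : ℝ, ∃ B, ∀ᵐ x ∂μ.restrict Ω, ∀ t ∈ Icc 0 T, |f x t| ≤ B) {σ c t₀ : ℝ}
    (hσ : q * θ < σ) (hc : 0 < c) (hAR : ∀ᵐ x ∂μ.restrict Ω, ∀ t, t₀ ≤ t →
      c ≤ σ * (∫ τ in (0 : ℝ)..t, f x τ) ∧ σ * (∫ τ in (0 : ℝ)..t, f x τ) ≤ t * f x t) :
    ∃ e : E → ℝ, ContDiff ℝ (⊤ : ℕ∞) e ∧ HasCompactSupport e ∧ tsupport e ⊆ Ω ∧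
      kirchhoffFunctional (μ.restrict Ω) p q a M f e < 0 ∧
      1 < doublePhaseNorm (μ.restrict Ω) p q a fun x => ‖fderiv ℝ e x‖ := by
  obtain ⟨x₀, hx₀⟩ := hΩne
  obtain ⟨φ, hφΩ, hφc, hφ, hφ01, hφx₀⟩ :=
    exists_contDiff_tsupport_subset (n := ⊤) (hΩo.mem_nhds hx₀)
  have hφ1 : ContDiff ℝ 1 φ := hφ.of_le (by exact_mod_cast le_top)
  have hφne : φ x₀ ≠ 0 := hφx₀ ▸ one_ne_zero
  have hJ := tendsto_kirchhoffFunctional_const_mul_atBot hΩo.measurableSet hp hpq ha ha0 hMc hθ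
    hMθ hfm hfc hfb hσ hc hAR hφ1 hφc hφΩ (fun x => (hφ01 (mem_range_self x)).1) hφne
  have hnorm := tendsto_doublePhaseNorm_fderiv_const_mul_atTop hp (hp.trans_le hpq) ha ha0 hφ1 hφc
    hφΩ hφne
  obtain ⟨t, hJt, hnormt⟩ := ((hJ.eventually_lt_atBot 0).and (hnorm.eventually_gt_atTop 1)).exists
  exact ⟨fun x => t * φ x, contDiff_const.mul hφ, hφc.mul_left,
    tsupport_mul_subset_right.trans hφΩ, hJt, hnormt⟩

/-- Lemma 3.2: under `(M₁)`, `(M₂)`, `(f₁)`, `(f₂)`, there exists `e ∈ C_c^∞(Ω)` with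
`J(e) < 0` and `‖∇e‖_𝓗 > 1`, where `J(u) = 𝓜(φ_𝓗(∇u)) − ∫_Ω F(x,u)dx`. -/
theorem stmt_13 {N : ℕ} (hN : 2 ≤ N) (Ω : Set (EuclideanSpace ℝ (Fin N)))
    (hΩo : IsOpen Ω) (hΩne : Ω.Nonempty) (hΩbd : Bornology.IsBounded Ω)
    (hΩlip : HasLipschitzBoundary Ω)
    (p q : ℝ) (hp : 1 < p) (hpq : p < q) (hqN : q < N) (hpqN : q / p < 1 + 1 / N)
    (a : EuclideanSpace ℝ (Fin N) → ℝ) (Ka : ℝ≥0)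
    (haLip : LipschitzOnWith Ka a (closure Ω)) (ha0 : ∀ x ∈ closure Ω, 0 ≤ a x)
    -- (M₁)
    (M : ℝ → ℝ) (hMc : ContinuousOn M (Set.Ici 0)) (hM0 : ∀ t, 0 ≤ t → 0 ≤ M t)
    (θ : ℝ) (hθ1 : 1 ≤ θ) (hθ2 : θ < (N * p / (N - p)) / q)
    (hM1 : ∀ t, 0 ≤ t → t * M t ≤ θ * ∫ τ in (0:ℝ)..t, M τ)
    -- (M₂)
    (hM2 : ∀ τ : ℝ, 0 < τ → ∃ κ > (0:ℝ), ∀ t, τ ≤ t → κ ≤ M t)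
    -- f Carathéodory
    (f : EuclideanSpace ℝ (Fin N) → ℝ → ℝ)
    (hfmeas : ∀ t : ℝ, Measurable fun x => f x t)
    (hfcont : ∀ᵐ x ∂(volume.restrict Ω), Continuous (f x))
    -- (f₁)
    (r : ℝ) (hr1 : q * θ < r) (hr2 : r < N * p / (N - p))
    (hf1 : ∀ ε > (0:ℝ), ∃ δ > (0:ℝ), ∀ᵐ x ∂(volume.restrict Ω), ∀ t : ℝ,
      |f x t| ≤ q * θ * ε * |t| ^ (q * θ - 1) + r * δ * |t| ^ (r - 1))
    -- (f₂)
    (σ c t₀ : ℝ) (hσ1 : q * θ < σ) (hσ2 : σ < N * p / (N - p)) (hcpos : 0 < c)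
    (ht₀ : 0 ≤ t₀)
    (hf2 : ∀ᵐ x ∂(volume.restrict Ω), ∀ t : ℝ, t₀ ≤ |t| →
      c ≤ σ * (∫ τ in (0:ℝ)..t, f x τ) ∧ σ * (∫ τ in (0:ℝ)..t, f x τ) ≤ t * f x t) :
    ∃ e : EuclideanSpace ℝ (Fin N) → ℝ, CcInfty Ω e ∧
      (∫ τ in (0:ℝ)..(∫ x in Ω, (‖fderiv ℝ e x‖ ^ p / p + a x * ‖fderiv ℝ e x‖ ^ q / q)), M τ)
          - (∫ x in Ω, ∫ τ in (0:ℝ)..(e x), f x τ) < 0 ∧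
      1 < luxH Ω p q a (fun x => ‖fderiv ℝ e x‖) := by
  have : Nontrivial (EuclideanSpace ℝ (Fin N)) :=
    Module.nontrivial_of_finrank_pos (R := ℝ) (by rw [finrank_euclideanSpace_fin]; lia)
  have hqθ : 1 ≤ q * θ := one_le_mul_of_one_le_of_one_le (hp.trans hpq).le hθ1
  obtain ⟨δ, hδ, hfδ⟩ := hf1 1 one_pos
  have hfb := exists_ae_forall_mem_Icc_abs_le (by linarith) (mul_nonneg (by linarith) hδ.le)
    (by linarith) (by linarith) hfδ
  obtain ⟨e, he, hec, heΩ, hJ, hnorm⟩ := stmt_13_general (μ := volume) hΩo hΩne (by linarith)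
    hpq.le ((haLip.continuousOn.mono subset_closure).locallyIntegrableOn hΩo.measurableSet)
    (ae_restrict_of_forall_mem hΩo.measurableSet fun x hx => ha0 x (subset_closure hx)) hMc
    (by linarith) ((eventually_ge_atTop 0).mono hM1) hfmeas hfcont hfb hσ1 hcpos
    (hf2.mono fun x hx t ht => hx t (ht.trans (le_abs_self t)))
  refine ⟨e, ⟨he, hec, heΩ⟩, ?_, hnorm⟩
  simpa only [kirchhoffFunctional, doublePhaseEnergy, abs_norm] using hJ
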